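/- Let (X, μ) be a σ-finite measure space and f, g ∈ L¹(X,μ) nonnegative. Then g is majorized by f (i.e. ∫_u^∞ μ{g > t} dt ≤ ∫_u^∞ μ{f > t} dt for every u ≥ 0 and ∫_X g dμ = ∫_X f dμ) if and only if there exists a sequence (S_k)_{k∈ℕ} of semi-doubly stochastic operators on L¹(X,μ) such that ‖S_k f − g‖₁ → 0 as k → ∞. -/

import Mathlib

open MeasureTheory Filter Topology

/-- `T : L¹(X,μ) → L¹(X,μ)` is a semi-doubly stochastic operator: it is positive,
integral preserving, and `∫_E T χ_B dμ ≤ μ(E)` for all measurable sets `E, B` of finite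
measure. -/
def IsSemiDoublyStochastic {X : Type*} [MeasurableSpace X] {μ : Measure X}
    (T : Lp ℝ 1 μ →L[ℝ] Lp ℝ 1 μ) : Prop :=
  (∀ f : Lp ℝ 1 μ, 0 ≤ᵐ[μ] (f : X → ℝ) → 0 ≤ᵐ[μ] (T f : X → ℝ)) ∧
  (∀ f : Lp ℝ 1 μ, ∫ x, (T f : X → ℝ) x ∂μ = ∫ x, (f : X → ℝ) x ∂μ) ∧
  (∀ E B : Set X, ∀ (_ : MeasurableSet E) (_ : μ E < ⊤) (hB : MeasurableSet B)
    (hBfin : μ B < ⊤),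
    ∫ x in E, (T (indicatorConstLp 1 hB hBfin.ne (1 : ℝ)) : X → ℝ) x ∂μ ≤ (μ E).toReal)

/-!
Majorization is the comparison of the masses `∫ (f - u)⁺` above every level `u ≥ 0`. A positive
integral-preserving operator that maps indicators below `1` does not increase these masses, and the
masses depend continuously on `f` in `L¹`, which settles one direction.

For the other direction, replace `f` and `g` by step functions with values `a i` and `b i` on common
cells of measure `m i`; the masses of `g` then exceed those of `f` by at most a small `ε`. Among the
couplings `π` of `m` with itself choose the one for which `π *ᵥ a` is closest to `m * b`. Exchanging
mass between two rows cannot improve `π`, so on the rows where `m * b` exceeds `π *ᵥ a` the plan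
uses only the largest values of `a`, those above some threshold `t`. Comparing the masses at the
level `t` shows that the total deficit of `π *ᵥ a` is at most `ε`. Averaging over cells and
redistributing along `π` is then a semi-doubly stochastic operator taking `f` close to `g`.
-/

section Excess

variable {X : Type*} [MeasurableSpace X] {μ : Measure X}

/-- The mass of `φ` above the level `u`. Majorization compares these masses level by level. -/
noncomputable def excess (μ : Measure X) (φ : X → ℝ) (u : ℝ) : ℝ :=
  ∫ x, (φ x - u)⁺ ∂μ

lemma excess_nonneg (φ : X → ℝ) (u : ℝ) : 0 ≤ excess μ φ u :=
  integral_nonneg fun _ => posPart_nonneg _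

lemma excess_congr_ae {φ ψ : X → ℝ} (h : φ =ᵐ[μ] ψ) (u : ℝ) : excess μ φ u = excess μ ψ u :=
  integral_congr_ae <| h.mono fun x hx => by simp only [hx]

lemma integrable_posPart_sub_const {φ : X → ℝ} (hφ : Integrable φ μ) {u : ℝ} (hu : 0 ≤ u) :
    Integrable (fun x => (φ x - u)⁺) μ := by
  refine hφ.mono (continuous_posPart.comp_aestronglyMeasurable
    (hφ.aestronglyMeasurable.sub aestronglyMeasurable_const)) (.of_forall fun x => ?_)
  rw [Real.norm_of_nonneg (posPart_nonneg _), Real.norm_eq_abs]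
  exact sup_le (by linarith [le_abs_self (φ x)]) (abs_nonneg _)

lemma setLIntegral_Ioi_measure_gt_eq {φ : X → ℝ} (hφ : AEMeasurable φ μ) (u : ℝ) :
    ∫⁻ t in Set.Ioi u, μ {x | φ x > t} = ∫⁻ x, ENNReal.ofReal (φ x - u)⁺ ∂μ := by
  have hshift := (measurePreserving_add_right (volume : Measure ℝ) u).setLIntegral_comp_preimage_emb
    (measurableEmbedding_addRight u) (fun t => μ {x | φ x > t}) (Set.Ioi u)
  rw [lintegral_eq_lintegral_meas_lt μ (.of_forall fun _ => posPart_nonneg _)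
    (continuous_posPart.measurable.comp_aemeasurable (hφ.sub_const u)), ← hshift,
    Set.preimage_add_const_Ioi, sub_self]
  refine setLIntegral_congr_fun measurableSet_Ioi fun t (ht : 0 < t) => ?_
  simp only [posPart_def, lt_sup_iff, ht.not_gt, or_false, lt_sub_iff_add_lt, gt_iff_lt]

lemma setLIntegral_Ioi_measure_gt_eq_ofReal_excess {φ : X → ℝ} (hφ : Integrable φ μ) {u : ℝ}
    (hu : 0 ≤ u) :
    ∫⁻ t in Set.Ioi u, μ {x | φ x > t} = ENNReal.ofReal (excess μ φ u) := by
  rw [setLIntegral_Ioi_measure_gt_eq hφ.aemeasurable, excess,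
    ofReal_integral_eq_lintegral_ofReal (integrable_posPart_sub_const hφ hu)
      (.of_forall fun _ => posPart_nonneg _)]

lemma setLIntegral_Ioi_measure_gt_le_iff {φ ψ : X → ℝ} (hφ : Integrable φ μ)
    (hψ : Integrable ψ μ) {u : ℝ} (hu : 0 ≤ u) :
    ∫⁻ t in Set.Ioi u, μ {x | φ x > t} ≤ ∫⁻ t in Set.Ioi u, μ {x | ψ x > t} ↔
      excess μ φ u ≤ excess μ ψ u := by
  rw [setLIntegral_Ioi_measure_gt_eq_ofReal_excess hφ hu,
    setLIntegral_Ioi_measure_gt_eq_ofReal_excess hψ hu,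
    ENNReal.ofReal_le_ofReal_iff (excess_nonneg ψ u)]

lemma norm_eq_integral_abs (φ : Lp ℝ 1 μ) : ‖φ‖ = ∫ x, |φ x| ∂μ :=
  L1.norm_eq_integral_norm φ

lemma norm_sub_eq_integral_abs (φ ψ : Lp ℝ 1 μ) : ‖φ - ψ‖ = ∫ x, |φ x - ψ x| ∂μ := by
  rw [← dist_eq_norm, L1.dist_eq_integral_dist]
  rfl

lemma abs_integral_sub_integral_le_norm_sub (φ ψ : Lp ℝ 1 μ) :
    |∫ x, φ x ∂μ - ∫ x, ψ x ∂μ| ≤ ‖φ - ψ‖ := by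
  rw [norm_sub_eq_integral_abs, ← integral_sub (L1.integrable_coeFn φ) (L1.integrable_coeFn ψ)]
  exact abs_integral_le_integral_abs

lemma excess_sub_excess_le_norm_sub (φ ψ : Lp ℝ 1 μ) {u : ℝ} (hu : 0 ≤ u) :
    excess μ φ u - excess μ ψ u ≤ ‖φ - ψ‖ := by
  have hφ := integrable_posPart_sub_const (L1.integrable_coeFn φ) hu
  have hψ := integrable_posPart_sub_const (L1.integrable_coeFn ψ) hu
  rw [excess, excess, ← integral_sub hφ hψ, norm_sub_eq_integral_abs]
  refine integral_mono (hφ.sub hψ)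
    ((L1.integrable_coeFn φ).sub (L1.integrable_coeFn ψ)).abs fun x => ?_
  have hlip := lipschitzWith_posPart.dist_le_mul (φ x - u) (ψ x - u)
  rw [Real.dist_eq, Real.dist_eq, sub_sub_sub_cancel_right, NNReal.coe_one, one_mul] at hlip
  exact (le_abs_self _).trans hlip

lemma continuous_excess {u : ℝ} (hu : 0 ≤ u) : Continuous fun φ : Lp ℝ 1 μ => excess μ φ u := by
  refine (LipschitzWith.of_le_add fun φ ψ => ?_ : LipschitzWith 1 _).continuous
  rw [dist_eq_norm]
  linarith [excess_sub_excess_le_norm_sub φ ψ hu]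

lemma norm_sub_eq_two_mul_excess_add (φ ψ : Lp ℝ 1 μ) :
    ‖φ - ψ‖ = 2 * excess μ (fun x => ψ x - φ x) 0 + (∫ x, φ x ∂μ - ∫ x, ψ x ∂μ) := by
  have hφ := L1.integrable_coeFn φ
  have hψ := L1.integrable_coeFn ψ
  have hpos : Integrable (fun x => (ψ x - φ x - 0)⁺) μ :=
    integrable_posPart_sub_const (hψ.sub hφ) le_rfl
  have hsub : Integrable (fun x => φ x - ψ x) μ := hφ.sub hψ
  rw [excess, norm_sub_eq_integral_abs, ← integral_sub hφ hψ, ← integral_const_mul,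
    ← integral_add (hpos.const_mul 2) hsub]
  congr 1 with x
  rcases le_total (φ x) (ψ x) with h | h
  · rw [abs_of_nonpos (by linarith), sub_zero, posPart_of_nonneg (by linarith)]
    ring
  · rw [abs_of_nonneg (by linarith), sub_zero, posPart_of_nonpos (by linarith)]
    ring

end Excess

section Operator

variable {X : Type*} [MeasurableSpace X] {μ : Measure X} {T : Lp ℝ 1 μ →L[ℝ] Lp ℝ 1 μ}

namespace IsSemiDoublyStochastic

lemma monotone (hT : IsSemiDoublyStochastic T) : Monotone T := by
  intro φ ψ h
  have := hT.1 (ψ - φ) ((Lp.coeFn_nonneg _).2 (sub_nonneg.2 h))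
  rwa [Lp.coeFn_nonneg, map_sub, sub_nonneg] at this

lemma norm_apply_le (hT : IsSemiDoublyStochastic T) (φ : Lp ℝ 1 μ) : ‖T φ‖ ≤ ‖φ‖ := by
  have habs : |T φ| ≤ T |φ| :=
    sup_le (hT.monotone (le_abs_self φ)) (by
      rw [← map_neg]
      exact hT.monotone (neg_le_abs φ))
  calc ‖T φ‖ = ∫ x, |T φ| x ∂μ := by
        rw [norm_eq_integral_abs, integral_congr_ae (Lp.coeFn_abs (T φ))]
    _ ≤ ∫ x, T |φ| x ∂μ := integral_mono_ae (L1.integrable_coeFn _) (L1.integrable_coeFn _)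
        ((Lp.coeFn_le _ _).2 habs)
    _ = ∫ x, |φ| x ∂μ := hT.2.1 _
    _ = ‖φ‖ := by rw [norm_eq_integral_abs, integral_congr_ae (Lp.coeFn_abs φ)]

lemma apply_indicatorConstLp_le_one (hT : IsSemiDoublyStochastic T) {B : Set X}
    (hB : MeasurableSet B) (hBfin : μ B ≠ ⊤) :
    ∀ᵐ x ∂μ, T (indicatorConstLp 1 hB hBfin 1) x ≤ 1 := by
  set ψ := T (indicatorConstLp 1 hB hBfin 1)
  have hψ : Integrable ψ μ := L1.integrable_coeFn ψ
  let E := {x | 1 < ψ x}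
  have hE : MeasurableSet E :=
    measurableSet_lt measurable_const (Lp.stronglyMeasurable ψ).measurable
  have hEfin : μ E < ⊤ := hψ.measure_gt_lt_top one_pos
  have hexcess : excess μ ψ 1 = ∫ x in E, (ψ x - 1) ∂μ := by
    rw [excess, ← integral_indicator hE]
    congr 1 with x
    by_cases hx : 1 < ψ x
    · rw [Set.indicator_of_mem (show x ∈ E from hx), posPart_of_nonneg (by linarith)]
    · rw [Set.indicator_of_notMem (show x ∉ E from hx), posPart_of_nonpos (by linarith)]
  have hexcess_nonpos : excess μ ψ 1 ≤ 0 := by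
    rw [hexcess, integral_sub hψ.integrableOn (integrableOn_const hEfin.ne), setIntegral_const,
      smul_eq_mul, mul_one, sub_nonpos]
    exact hT.2.2 E B hE hEfin hB hBfin.lt_top
  have hzero := (integral_eq_zero_iff_of_nonneg (fun _ => posPart_nonneg _)
    (integrable_posPart_sub_const hψ zero_le_one)).1
    (hexcess_nonpos.antisymm (excess_nonneg (μ := μ) ψ 1))
  filter_upwards [hzero] with x hx
  exact sub_nonpos.1 (posPart_eq_zero.1 hx)

/-- The bound `φ ≤ (φ - u)⁺ + u • χ_B` survives `T`, which preserves the integral of the first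
term and maps `χ_B` below `1`. -/
lemma excess_apply_le_of_ae_eq_zero_off (hT : IsSemiDoublyStochastic T) {φ : Lp ℝ 1 μ} {B : Set X}
    (hB : MeasurableSet B) (hBfin : μ B ≠ ⊤) (hφB : ∀ᵐ x ∂μ, x ∉ B → φ x = 0) {u : ℝ}
    (hu : 0 ≤ u) : excess μ (T φ) u ≤ excess μ φ u := by
  have hint := integrable_posPart_sub_const (L1.integrable_coeFn φ) hu
  let χ : Lp ℝ 1 μ := indicatorConstLp 1 hB hBfin 1
  have hle : φ ≤ hint.toL1 _ + u • χ := by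
    rw [← Lp.coeFn_le]
    filter_upwards [hφB, Lp.coeFn_add (hint.toL1 _) (u • χ), hint.coeFn_toL1, Lp.coeFn_smul u χ,
      indicatorConstLp_coeFn (p := 1) (hs := hB) (hμs := hBfin) (c := (1 : ℝ))]
      with x hxB hadd hpos hsmul hχ
    rw [hadd, Pi.add_apply, hpos, hsmul, Pi.smul_apply, hχ, smul_eq_mul]
    by_cases hx : x ∈ B
    · rw [Set.indicator_of_mem hx]
      linarith [le_posPart (φ x - u)]
    · rw [Set.indicator_of_notMem hx, hxB hx]
      linarith [posPart_nonneg (0 - u)]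
  have hTle := hT.monotone hle
  rw [map_add, map_smul, ← Lp.coeFn_le] at hTle
  have hTpos := hT.1 (hint.toL1 _) (by
    filter_upwards [hint.coeFn_toL1] with x hx
    rw [hx]
    exact posPart_nonneg _)
  calc excess μ (T φ) u ≤ ∫ x, T (hint.toL1 _) x ∂μ := by
        refine integral_mono_ae (integrable_posPart_sub_const (L1.integrable_coeFn _) hu)
          (L1.integrable_coeFn _) ?_
        filter_upwards [hTle, hTpos, hT.apply_indicatorConstLp_le_one hB hBfin,
          Lp.coeFn_add (T (hint.toL1 _)) (u • T χ), Lp.coeFn_smul u (T χ)]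
          with x hx hpos hone hadd hsmul
        rw [hadd, Pi.add_apply, hsmul, Pi.smul_apply, smul_eq_mul] at hx
        have := mul_le_of_le_one_right hu hone
        exact sup_le (by linarith) hpos
    _ = excess μ φ u := by rw [hT.2.1, integral_congr_ae hint.coeFn_toL1, excess]

lemma excess_apply_le (hT : IsSemiDoublyStochastic T) (φ : Lp ℝ 1 μ) {u : ℝ} (hu : 0 ≤ u) :
    excess μ (T φ) u ≤ excess μ φ u := by
  refine (Lp.simpleFunc.dense (E := ℝ) (p := 1) (μ := μ) ENNReal.one_ne_top).induction ?_
    (isClosed_le ((continuous_excess hu).comp T.continuous) (continuous_excess hu)) φ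
  intro φ hφ
  let s := Lp.simpleFunc.toSimpleFunc ⟨φ, hφ⟩
  have hsφ : s =ᵐ[μ] φ := Lp.simpleFunc.toSimpleFunc_eq_toFun ⟨φ, hφ⟩
  have hsupp : μ (Function.support s) < ⊤ := s.measure_support_lt_top_of_integrable
    (memLp_one_iff_integrable.1 (Lp.simpleFunc.memLp ⟨φ, hφ⟩))
  refine hT.excess_apply_le_of_ae_eq_zero_off s.measurableSet_support hsupp.ne ?_ hu
  filter_upwards [hsφ] with x hx hxs
  rw [← hx, Function.notMem_support.1 hxs]

end IsSemiDoublyStochastic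

end Operator

section Couplings

open Matrix

variable {ι : Type*} [Fintype ι] {m : ι → ℝ}

/-- Transport plans from the discrete measure `m` to itself: nonnegative matrices both of whose
marginals are `m`. For `m = 1` these are the doubly stochastic matrices. -/
def couplings (m : ι → ℝ) : Set (Matrix ι ι ℝ) :=
  {π | (∀ i j, 0 ≤ π i j) ∧ (∀ i, ∑ j, π i j = m i) ∧ ∀ j, ∑ i, π i j = m j}

lemma diagonal_mem_couplings [DecidableEq ι] (hm : 0 ≤ m) : diagonal m ∈ couplings m := by
  refine ⟨fun i j => ?_, fun i => ?_, fun j => ?_⟩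
  · rw [diagonal_apply]
    split_ifs
    exacts [hm i, le_rfl]
  · simp only [diagonal_apply, Finset.sum_ite_eq, Finset.mem_univ, if_true]
  · simp only [diagonal_apply, Finset.sum_ite_eq', Finset.mem_univ, if_true]

lemma convex_couplings (m : ι → ℝ) : Convex ℝ (couplings m) := by
  rintro π ⟨h0, hrow, hcol⟩ ρ ⟨h0', hrow', hcol'⟩ s t hs ht hst
  refine ⟨fun i j => ?_, fun i => ?_, fun j => ?_⟩
  · exact add_nonneg (mul_nonneg hs (h0 i j)) (mul_nonneg ht (h0' i j))
  · simp only [Matrix.add_apply, Matrix.smul_apply, smul_eq_mul, Finset.sum_add_distrib,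
      ← Finset.mul_sum, hrow, hrow', ← add_mul, hst, one_mul]
  · simp only [Matrix.add_apply, Matrix.smul_apply, smul_eq_mul, Finset.sum_add_distrib,
      ← Finset.mul_sum, hcol, hcol', ← add_mul, hst, one_mul]

lemma isClosed_couplings (m : ι → ℝ) : IsClosed (couplings m) := by
  simp only [couplings, Set.ofPred_and, Set.ofPred_forall]
  refine .inter ?_ (.inter ?_ ?_)
  · exact isClosed_iInter fun i => isClosed_iInter fun j =>
      isClosed_le continuous_const (continuous_apply_apply i j)
  · exact isClosed_iInter fun i => isClosed_eq
      (continuous_finsetSum _ fun j _ => continuous_apply_apply i j) continuous_const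
  · exact isClosed_iInter fun j => isClosed_eq
      (continuous_finsetSum _ fun i _ => continuous_apply_apply i j) continuous_const

lemma isCompact_couplings (m : ι → ℝ) : IsCompact (couplings m) := by
  have hbox : IsCompact (Set.univ.pi fun i => Set.univ.pi fun _ : ι => Set.Icc 0 (m i)) :=
    isCompact_univ_pi fun i => isCompact_univ_pi fun _ => isCompact_Icc
  refine hbox.of_isClosed_subset (isClosed_couplings m) fun π hπ i _ j _ => ⟨hπ.1 i j, ?_⟩
  rw [← hπ.2.1 i]
  exact Finset.single_le_sum (fun j _ => hπ.1 i j) (Finset.mem_univ j)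

/-- The image of `couplings m` under `π ↦ π *ᵥ a` is compact and convex; at the orthogonal
projection of `y` onto it, the residual attains its support function. -/
lemma exists_isMaxOn_couplings_residual_dotProduct (hm : 0 ≤ m) (a y : ι → ℝ) :
    ∃ π ∈ couplings m,
      IsMaxOn (fun ρ : Matrix ι ι ℝ => (y - π *ᵥ a) ⬝ᵥ (ρ *ᵥ a)) (couplings m) π := by
  classical
  let L : Matrix ι ι ℝ →ₗ[ℝ] EuclideanSpace ℝ ι :=
    (WithLp.linearEquiv 2 ℝ (ι → ℝ)).symm.toLinearMap ∘ₗ (mulVecBilin ℝ ℝ).flip a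
  have hL : ∀ ρ, L ρ = WithLp.toLp 2 (ρ *ᵥ a) := fun _ => rfl
  have hcompact : IsCompact (L '' couplings m) :=
    (isCompact_couplings m).image L.continuous_of_finiteDimensional
  have hconvex : Convex ℝ (L '' couplings m) := (convex_couplings m).linear_image L
  obtain ⟨_, ⟨π, hπ, rfl⟩, hmin⟩ := exists_norm_eq_iInf_of_complete_convex
    (Set.Nonempty.image L ⟨_, diagonal_mem_couplings hm⟩) hcompact.isComplete hconvex
    (WithLp.toLp 2 y)
  refine ⟨π, hπ, fun ρ hρ => ?_⟩
  have hproj := (norm_eq_iInf_iff_real_inner_le_zero hconvex ⟨π, hπ, rfl⟩).1 hmin _ ⟨ρ, hρ, rfl⟩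
  rw [hL, hL, ← WithLp.toLp_sub, ← WithLp.toLp_sub, EuclideanSpace.inner_toLp_toLp, star_trivial,
    dotProduct_comm, dotProduct_sub, sub_nonpos] at hproj
  exact hproj

/-- The perturbation moves mass `δ` from two opposite corners of a rectangle of entries to the other
two. -/
lemma add_smul_vecMulVec_single_mem_couplings [DecidableEq ι] {π : Matrix ι ι ℝ}
    (hπ : π ∈ couplings m) {i i' j j' : ι} (hi : i ≠ i') (hj : j ≠ j') {δ : ℝ} (hδ : 0 ≤ δ)
    (hij : δ ≤ π i j) (hij' : δ ≤ π i' j') :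
    π + δ • vecMulVec (Pi.single i 1 - Pi.single i' 1) (Pi.single j' 1 - Pi.single j 1) ∈
      couplings m := by
  have hsum : ∀ k l : ι, ∑ x, (Pi.single k 1 - Pi.single l 1 : ι → ℝ) x = 0 := fun k l => by
    simp only [Pi.sub_apply, Finset.sum_sub_distrib, Finset.sum_pi_single', Finset.mem_univ,
      if_true, sub_self]
  refine ⟨fun k l => ?_, fun k => ?_, fun l => ?_⟩
  · have := hπ.1 k l
    simp only [Matrix.add_apply, Matrix.smul_apply, vecMulVec_apply, Pi.sub_apply, Pi.single_apply,
      smul_eq_mul]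
    split_ifs <;> subst_vars <;> first | contradiction | linarith
  · simp only [Matrix.add_apply, Matrix.smul_apply, vecMulVec_apply, smul_eq_mul,
      Finset.sum_add_distrib, ← Finset.mul_sum, hsum, hπ.2.1 k, mul_zero, add_zero]
  · simp only [Matrix.add_apply, Matrix.smul_apply, vecMulVec_apply, smul_eq_mul,
      Finset.sum_add_distrib, ← Finset.mul_sum, ← Finset.sum_mul, hsum, hπ.2.2 l, zero_mul,
      mul_zero, add_zero]

lemma le_of_isMaxOn_couplings {h a : ι → ℝ} {π : Matrix ι ι ℝ} (hπ : π ∈ couplings m)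
    (hmax : IsMaxOn (fun ρ : Matrix ι ι ℝ => h ⬝ᵥ (ρ *ᵥ a)) (couplings m) π) {i i' j j' : ι}
    (hi : h i' < h i) (hij : 0 < π i j) (hij' : 0 < π i' j') : a j' ≤ a j := by
  classical
  rcases eq_or_ne j j' with rfl | hj
  · exact le_rfl
  let δ := min (π i j) (π i' j')
  have hδ : 0 < δ := lt_min hij hij'
  have hle := hmax <| add_smul_vecMulVec_single_mem_couplings hπ
    (fun hii' => hi.ne' (congrArg h hii')) hj hδ.le (min_le_left _ _) (min_le_right _ _)
  have hgain : δ * ((h i - h i') * (a j' - a j)) ≤ 0 := by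
    simpa [add_mulVec, smul_mulVec, vecMulVec_mulVec, dotProduct_add, dotProduct_smul,
      sub_dotProduct, dotProduct_sub] using hle
  have hprod := nonpos_of_mul_nonpos_right hgain hδ
  exact sub_nonpos.1 (nonpos_of_mul_nonpos_right hprod (sub_pos.2 hi))

lemma exists_sum_mul_posPart_sub_eq {a : ι → ℝ} {π : Matrix ι ι ℝ} (hπ : π ∈ couplings m)
    (I : Finset ι)
    (hI : ∀ i ∈ I, ∀ i' ∉ I, ∀ j j', 0 < π i j → 0 < π i' j' → a j' ≤ a j) (ha : 0 ≤ a) :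
    ∃ t, 0 ≤ t ∧ ∑ j, m j * (a j - t)⁺ = ∑ i ∈ I, ((π *ᵥ a) i - m i * t) := by
  let S : Set ℝ := insert 0 (a '' {j | ∃ i ∉ I, 0 < π i j})
  have hS : BddAbove S := ((Set.toFinite _).image a).insert 0 |>.bddAbove
  have hout : ∀ i ∉ I, ∀ j, 0 < π i j → a j ≤ sSup S := fun i hi j hij =>
    le_csSup hS (.inr ⟨j, ⟨i, hi, hij⟩, rfl⟩)
  have hin : ∀ i ∈ I, ∀ j, 0 < π i j → sSup S ≤ a j := fun i hi j hij =>
    csSup_le ⟨0, .inl rfl⟩ (by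
      rintro _ (rfl | ⟨j', ⟨i', hi', hij'⟩, rfl⟩)
      exacts [ha j, hI i hi i' hi' j j' hij hij'])
  refine ⟨sSup S, le_csSup hS (.inl rfl), ?_⟩
  have hrow : ∀ i, ∑ j, π i j * (a j - sSup S) = (π *ᵥ a) i - m i * sSup S := fun i => by
    simp only [mul_sub, Finset.sum_sub_distrib, ← Finset.sum_mul, hπ.2.1 i, mulVec, dotProduct]
  calc ∑ j, m j * (a j - sSup S)⁺ = ∑ i, ∑ j, π i j * (a j - sSup S)⁺ := by
        rw [Finset.sum_comm]
        simp only [← Finset.sum_mul, hπ.2.2]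
    _ = ∑ i ∈ I, ∑ j, π i j * (a j - sSup S)⁺ := by
        refine (Finset.sum_subset I.subset_univ fun i _ hi => Finset.sum_eq_zero fun j _ => ?_).symm
        rcases (hπ.1 i j).eq_or_lt with h | h
        · rw [← h, zero_mul]
        · rw [posPart_of_nonpos (sub_nonpos.2 (hout i hi j h)), mul_zero]
    _ = ∑ i ∈ I, ((π *ᵥ a) i - m i * sSup S) := by
        refine Finset.sum_congr rfl fun i hi => ?_
        rw [← hrow]
        refine Finset.sum_congr rfl fun j _ => ?_
        rcases (hπ.1 i j).eq_or_lt with h | h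
        · rw [← h, zero_mul, zero_mul]
        · rw [posPart_of_nonneg (sub_nonneg.2 (hin i hi j h))]

/-- A weighted Hardy–Littlewood–Pólya theorem with an error term. -/
theorem exists_mem_couplings_sum_posPart_sub_mulVec_le {a b : ι → ℝ} {ε : ℝ} (hm : 0 ≤ m)
    (ha : 0 ≤ a)
    (hab : ∀ u, 0 ≤ u → ∑ i, m i * (b i - u)⁺ ≤ ∑ i, m i * (a i - u)⁺ + ε) :
    ∃ π ∈ couplings m, ∑ i, (m i * b i - (π *ᵥ a) i)⁺ ≤ ε := by
  classical
  obtain ⟨π, hπ, hmax⟩ := exists_isMaxOn_couplings_residual_dotProduct hm a (m * b)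
  refine ⟨π, hπ, ?_⟩
  let I : Finset ι := {i | (π *ᵥ a) i < m i * b i}
  have hI : ∀ i ∈ I, ∀ i' ∉ I, ∀ j j', 0 < π i j → 0 < π i' j' → a j' ≤ a j := by
    intro i hi i' hi' j j' hij hij'
    refine le_of_isMaxOn_couplings hπ hmax ?_ hij hij'
    simp only [I, Finset.mem_filter_univ, not_lt, Pi.sub_apply, Pi.mul_apply] at hi hi' ⊢
    linarith
  obtain ⟨t, ht, heq⟩ := exists_sum_mul_posPart_sub_eq hπ I hI ha
  have hb : ∑ i ∈ I, m i * (b i - t) ≤ ∑ i, m i * (b i - t)⁺ :=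
    (Finset.sum_le_sum fun i _ => mul_le_mul_of_nonneg_left (le_posPart _) (hm i)).trans
      (Finset.sum_le_univ_sum_of_nonneg fun i => mul_nonneg (hm i) (posPart_nonneg _))
  calc ∑ i, (m i * b i - (π *ᵥ a) i)⁺ = ∑ i ∈ I, (m i * b i - (π *ᵥ a) i) := by
        rw [Finset.sum_filter]
        refine Finset.sum_congr rfl fun i _ => ?_
        split_ifs with hi
        · exact posPart_of_nonneg (sub_nonneg.2 hi.le)
        · exact posPart_of_nonpos (sub_nonpos.2 (not_lt.1 hi))
    _ = ∑ i ∈ I, m i * (b i - t) - ∑ i ∈ I, ((π *ᵥ a) i - m i * t) := by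
        rw [← Finset.sum_sub_distrib]
        exact Finset.sum_congr rfl fun i _ => by ring
    _ ≤ ε := by linarith [hab t ht]

end Couplings

section Step

variable {X E F ι : Type*} {A : ι → Set X}

/-- The step function with value `c i` on the cell `A i`, and `0` off the cells. -/
noncomputable def step [Fintype ι] [AddCommMonoid E] (A : ι → Set X) (c : ι → E) (x : X) : E :=
  ∑ i, (A i).indicator (fun _ => c i) x

lemma step_of_notMem [Fintype ι] [AddCommMonoid E] (c : ι → E) {x : X} (hx : x ∉ ⋃ i, A i) :
    step A c x = 0 :=
  Finset.sum_eq_zero fun i _ => Set.indicator_of_notMem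
    (fun hi => hx (Set.mem_iUnion_of_mem i hi)) _

lemma step_sub [Fintype ι] [AddCommGroup E] (b c : ι → E) :
    step A (b - c) = step A b - step A c := by
  ext x
  simp only [step, Pi.sub_apply, ← Finset.sum_sub_distrib]
  exact Finset.sum_congr rfl fun i _ =>
    congrFun (Set.indicator_sub (A i) (fun _ => b i) fun _ => c i) x

variable [MeasurableSpace X] {μ : Measure X}

/-- A family of pairwise disjoint measurable sets of positive finite measure; finiteness is
encoded by `μ.real` being `0` on sets of infinite measure. -/
structure IsCellFamily (μ : Measure X) (A : ι → Set X) : Prop where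
  measurableSet : ∀ i, MeasurableSet (A i)
  pairwise_disjoint : Pairwise (Function.onFun Disjoint A)
  measureReal_pos : ∀ i, 0 < μ.real (A i)

namespace IsCellFamily

lemma measure_ne_top (hA : IsCellFamily μ A) (i : ι) : μ (A i) ≠ ⊤ := fun h =>
  (hA.measureReal_pos i).ne' (by rw [measureReal_def, h, ENNReal.toReal_top])

variable [Fintype ι]

lemma step_of_mem [AddCommMonoid E] (hA : IsCellFamily μ A) (c : ι → E) {i : ι} {x : X}
    (hx : x ∈ A i) : step A c x = c i := by
  rw [step, Finset.sum_eq_single i _ fun hi => (hi (Finset.mem_univ i)).elim,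
    Set.indicator_of_mem hx]
  exact fun j _ hj => Set.indicator_of_notMem
    ((hA.pairwise_disjoint hj).notMem_of_mem_right hx) _

lemma comp_step [AddCommMonoid E] [AddCommMonoid F] (hA : IsCellFamily μ A) {Φ : E → F}
    (hΦ : Φ 0 = 0) (c : ι → E) : Φ ∘ step A c = step A (Φ ∘ c) := by
  ext x
  by_cases hx : x ∈ ⋃ i, A i
  · obtain ⟨i, hi⟩ := Set.mem_iUnion.1 hx
    simp only [Function.comp_apply, hA.step_of_mem _ hi]
  · simp only [Function.comp_apply, step_of_notMem _ hx, hΦ]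

lemma integrable_step [NormedAddCommGroup E] (hA : IsCellFamily μ A) (c : ι → E) :
    Integrable (step A c) μ :=
  integrable_finsetSum _ fun i _ =>
    (integrable_indicator_iff (hA.measurableSet i)).2 (integrableOn_const (hA.measure_ne_top i))

lemma integral_step (hA : IsCellFamily μ A) (c : ι → ℝ) :
    ∫ x, step A c x ∂μ = ∑ i, μ.real (A i) * c i := by
  simp only [step]
  rw [integral_finsetSum _ fun i _ => (integrable_indicator_iff (hA.measurableSet i)).2
    (integrableOn_const (hA.measure_ne_top i))]
  simp only [integral_indicator_const _ (hA.measurableSet _), smul_eq_mul]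

lemma excess_step (hA : IsCellFamily μ A) (c : ι → ℝ) {u : ℝ} (hu : 0 ≤ u) :
    excess μ (step A c) u = ∑ i, μ.real (A i) * (c i - u)⁺ := by
  have hcomp := hA.comp_step (Φ := fun s : ℝ => (s - u)⁺)
    (posPart_of_nonpos (by linarith)) c
  calc excess μ (step A c) u = ∫ x, step A (fun i => (c i - u)⁺) x ∂μ :=
        congrArg (fun φ : X → ℝ => ∫ x, φ x ∂μ) hcomp
    _ = ∑ i, μ.real (A i) * (c i - u)⁺ := hA.integral_step _

end IsCellFamily

lemma exists_isCellFamily_ae_eq_step [NormedAddCommGroup E] (s : SimpleFunc X E)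
    (hs : Integrable s μ) :
    ∃ R : Finset E, IsCellFamily μ (fun y : R => s ⁻¹' {y.1}) ∧
      s =ᵐ[μ] step (fun y : R => s ⁻¹' {y.1}) Subtype.val := by
  classical
  let R := s.range.filter fun y => μ.real (s ⁻¹' {y}) ≠ 0
  have hcells : IsCellFamily μ (fun y : R => s ⁻¹' {y.1}) := {
    measurableSet := fun y => s.measurableSet_preimage _
    pairwise_disjoint := fun y z hyz =>
      Disjoint.preimage _ (Set.disjoint_singleton.2 (Subtype.coe_ne_coe.2 hyz))
    measureReal_pos := fun y =>
      measureReal_nonneg.lt_of_ne' (Finset.mem_filter.1 y.2).2 }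
  have hnull : ∀ᵐ x ∂μ, ∀ y ∈ s.range, s x = y → μ (s ⁻¹' {y}) ≠ 0 := by
    rw [Filter.eventually_all_finset]
    intro y _
    by_cases hy : μ (s ⁻¹' {y}) = 0
    · filter_upwards [measure_eq_zero_iff_ae_notMem.1 hy] with x hx hxy
      exact (hx hxy).elim
    · exact .of_forall fun _ _ => hy
  refine ⟨R, hcells, ?_⟩
  filter_upwards [hnull] with x hx
  by_cases hxR : s x ∈ R
  · exact (hcells.step_of_mem Subtype.val (i := ⟨s x, hxR⟩) rfl).symm
  · have hreal : μ.real (s ⁻¹' {s x}) = 0 := by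
      by_contra h
      exact hxR (Finset.mem_filter.2 ⟨s.mem_range_self x, h⟩)
    have hinfinite : μ (s ⁻¹' {s x}) = ⊤ :=
      ((ENNReal.toReal_eq_zero_iff _).1 hreal).resolve_left (hx _ (s.mem_range_self x) rfl)
    have hzero : s x = 0 := by
      by_contra h
      exact (SimpleFunc.integrable_iff.1 hs _ h).ne hinfinite
    refine hzero.trans (step_of_notMem _ ?_).symm
    rintro ⟨_, ⟨y, rfl⟩, hy⟩
    exact hxR ((show s x = y from hy) ▸ y.2)

end Step

section Transfer

open Matrix

variable {X ι : Type*} [MeasurableSpace X] {μ : Measure X} {A : ι → Set X} {π : Matrix ι ι ℝ}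
  {φ ψ : X → ℝ}

/-- The averages of `φ` over the cells `A i`. -/
noncomputable def cellAverage (μ : Measure X) (A : ι → Set X) (φ : X → ℝ) (i : ι) : ℝ :=
  ⨍ x in A i, φ x ∂μ

lemma cellAverage_congr_ae (h : φ =ᵐ[μ] ψ) : cellAverage μ A φ = cellAverage μ A ψ :=
  funext fun _ => average_congr (ae_restrict_of_ae h)

lemma cellAverage_nonneg (h : 0 ≤ᵐ[μ] φ) : 0 ≤ cellAverage μ A φ := fun i => by
  rw [Pi.zero_apply, cellAverage, setAverage_eq]
  exact smul_nonneg (inv_nonneg.2 measureReal_nonneg)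
    (integral_nonneg_of_ae (ae_restrict_of_ae h))

lemma cellAverage_add (hφ : Integrable φ μ) (hψ : Integrable ψ μ) :
    cellAverage μ A (φ + ψ) = cellAverage μ A φ + cellAverage μ A ψ := by
  ext i
  simp only [cellAverage, setAverage_eq, Pi.add_apply,
    integral_add hφ.integrableOn hψ.integrableOn, smul_add]

lemma cellAverage_smul (c : ℝ) : cellAverage μ A (c • φ) = c • cellAverage μ A φ := by
  ext i
  simp only [cellAverage, setAverage_eq, Pi.smul_apply, integral_smul, smul_comm c]

namespace IsCellFamily

lemma measureReal_mul_cellAverage (hA : IsCellFamily μ A) (i : ι) :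
    μ.real (A i) * cellAverage μ A φ i = ∫ x in A i, φ x ∂μ := by
  rw [cellAverage, setAverage_eq, smul_eq_mul, mul_inv_cancel_left₀ (hA.measureReal_pos i).ne']

lemma cellAverage_indicator_one_le (hA : IsCellFamily μ A) {B : Set X} (hB : MeasurableSet B)
    (i : ι) : cellAverage μ A (B.indicator 1) i ≤ 1 := by
  refine le_of_mul_le_mul_left ?_ (hA.measureReal_pos i)
  rw [hA.measureReal_mul_cellAverage, integral_indicator_one hB, mul_one,
    measureReal_restrict_apply hB]
  exact measureReal_mono Set.inter_subset_right (hA.measure_ne_top i)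

end IsCellFamily

variable [Fintype ι]

/-- Averages `φ` on each cell, redistributes the cell masses along the plan `π`, and leaves `φ`
unchanged off the cells. -/
noncomputable def transfer (μ : Measure X) (A : ι → Set X) (π : Matrix ι ι ℝ) (φ : X → ℝ) :
    X → ℝ :=
  step A (fun i => (π *ᵥ cellAverage μ A φ) i / μ.real (A i)) + (⋃ i, A i)ᶜ.indicator φ

lemma transfer_congr_ae (h : φ =ᵐ[μ] ψ) : transfer μ A π φ =ᵐ[μ] transfer μ A π ψ := by
  simp only [transfer, cellAverage_congr_ae h]
  exact .add .rfl h.indicator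

lemma transfer_of_notMem {x : X} (hx : x ∉ ⋃ i, A i) : transfer μ A π φ x = φ x := by
  rw [transfer, Pi.add_apply, step_of_notMem _ hx, zero_add, Set.indicator_of_mem hx]

namespace IsCellFamily

variable (hA : IsCellFamily μ A)
include hA

lemma cellAverage_step (a : ι → ℝ) : cellAverage μ A (step A a) = a := by
  ext i
  refine mul_left_cancel₀ (hA.measureReal_pos i).ne' ?_
  rw [hA.measureReal_mul_cellAverage, setIntegral_congr_fun (hA.measurableSet i)
    fun x hx => hA.step_of_mem a hx, setIntegral_const, smul_eq_mul]

lemma transfer_of_mem {i : ι} {x : X} (hx : x ∈ A i) :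
    transfer μ A π φ x = (π *ᵥ cellAverage μ A φ) i / μ.real (A i) := by
  rw [transfer, Pi.add_apply, hA.step_of_mem _ hx,
    Set.indicator_of_notMem (Set.notMem_compl_iff.2 (Set.mem_iUnion_of_mem i hx)), add_zero]

lemma transfer_add (hφ : Integrable φ μ) (hψ : Integrable ψ μ) :
    transfer μ A π (φ + ψ) = transfer μ A π φ + transfer μ A π ψ := by
  ext x
  by_cases hx : x ∈ ⋃ i, A i
  · obtain ⟨i, hi⟩ := Set.mem_iUnion.1 hx
    simp only [Pi.add_apply, hA.transfer_of_mem hi, cellAverage_add hφ hψ, mulVec_add, add_div]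
  · simp only [Pi.add_apply, transfer_of_notMem hx]

lemma transfer_smul (c : ℝ) : transfer μ A π (c • φ) = c • transfer μ A π φ := by
  ext x
  by_cases hx : x ∈ ⋃ i, A i
  · obtain ⟨i, hi⟩ := Set.mem_iUnion.1 hx
    simp only [Pi.smul_apply, hA.transfer_of_mem hi, cellAverage_smul, mulVec_smul, smul_eq_mul,
      mul_div_assoc]
  · simp only [Pi.smul_apply, transfer_of_notMem hx]

lemma transfer_step (a : ι → ℝ) :
    transfer μ A π (step A a) = step A fun i => (π *ᵥ a) i / μ.real (A i) := by
  ext x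
  by_cases hx : x ∈ ⋃ i, A i
  · obtain ⟨i, hi⟩ := Set.mem_iUnion.1 hx
    rw [hA.transfer_of_mem hi, hA.step_of_mem _ hi, hA.cellAverage_step]
  · rw [transfer_of_notMem hx, step_of_notMem _ hx, step_of_notMem _ hx]

lemma excess_step_sub_transfer_step (a b : ι → ℝ) :
    excess μ (step A b - transfer μ A π (step A a)) 0 =
      ∑ i, (μ.real (A i) * b i - (π *ᵥ a) i)⁺ := by
  rw [hA.transfer_step, ← step_sub, hA.excess_step _ le_rfl]
  refine Finset.sum_congr rfl fun i _ => ?_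
  have hm := hA.measureReal_pos i
  rw [sub_zero, posPart_def, posPart_def, mul_max_of_nonneg _ _ hm.le, mul_zero, Pi.sub_apply,
    mul_sub, mul_div_cancel₀ _ hm.ne']

lemma integrable_transfer (hφ : Integrable φ μ) : Integrable (transfer μ A π φ) μ :=
  (hA.integrable_step _).add (hφ.indicator (MeasurableSet.iUnion hA.measurableSet).compl)

lemma integral_transfer (hπ : π ∈ couplings fun i => μ.real (A i)) (hφ : Integrable φ μ) :
    ∫ x, transfer μ A π φ x ∂μ = ∫ x, φ x ∂μ := by
  have hU := MeasurableSet.iUnion hA.measurableSet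
  have hcells : ∫ x, step A (fun i => (π *ᵥ cellAverage μ A φ) i / μ.real (A i)) x ∂μ =
      ∫ x in ⋃ i, A i, φ x ∂μ :=
    calc _ = ∑ i, ∑ j, π i j * cellAverage μ A φ j := by
          rw [hA.integral_step]
          simp only [mul_div_cancel₀ _ (hA.measureReal_pos _).ne', mulVec, dotProduct]
      _ = ∑ j, μ.real (A j) * cellAverage μ A φ j := by
          rw [Finset.sum_comm]
          simp only [← Finset.sum_mul, hπ.2.2]
      _ = ∫ x in ⋃ i, A i, φ x ∂μ := by
          simp only [hA.measureReal_mul_cellAverage]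
          exact (integral_iUnion_fintype hA.measurableSet hA.pairwise_disjoint
            fun i => hφ.integrableOn).symm
  simp only [transfer, Pi.add_apply]
  rw [integral_add (hA.integrable_step _) (hφ.indicator hU.compl), hcells,
    integral_indicator hU.compl, integral_add_compl hU hφ]

lemma transfer_nonneg (hπ : ∀ i j, 0 ≤ π i j) (h : 0 ≤ᵐ[μ] φ) :
    0 ≤ᵐ[μ] transfer μ A π φ := by
  filter_upwards [h] with x hφx
  by_cases hx : x ∈ ⋃ i, A i
  · obtain ⟨i, hi⟩ := Set.mem_iUnion.1 hx
    rw [hA.transfer_of_mem hi]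
    exact div_nonneg (Finset.sum_nonneg fun j _ => mul_nonneg (hπ i j) (cellAverage_nonneg h j))
      measureReal_nonneg
  · rwa [transfer_of_notMem hx]

lemma transfer_indicator_one_le (hπ : π ∈ couplings fun i => μ.real (A i)) {B : Set X}
    (hB : MeasurableSet B) (x : X) : transfer μ A π (B.indicator 1) x ≤ 1 := by
  by_cases hx : x ∈ ⋃ i, A i
  · obtain ⟨i, hi⟩ := Set.mem_iUnion.1 hx
    rw [hA.transfer_of_mem hi, div_le_one (hA.measureReal_pos i)]
    refine le_of_le_of_eq ?_ (hπ.2.1 i)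
    exact Finset.sum_le_sum fun j _ =>
      mul_le_of_le_one_right (hπ.1 i j) (hA.cellAverage_indicator_one_le hB j)
  · rw [transfer_of_notMem hx]
    exact Set.indicator_le_self' (fun _ _ => zero_le_one) x

lemma abs_transfer_le (hπ : ∀ i j, 0 ≤ π i j) (hφ : Integrable φ μ) :
    ∀ᵐ x ∂μ, |transfer μ A π φ x| ≤ transfer μ A π |φ| x := by
  have habs : Integrable |φ| μ := hφ.abs
  have hadd := hA.transfer_nonneg hπ
    (.of_forall fun x => by simpa using neg_le_iff_add_nonneg'.1 (neg_abs_le (φ x)) :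
      0 ≤ᵐ[μ] |φ| + φ)
  have hsub := hA.transfer_nonneg hπ
    (.of_forall fun x => by simpa using le_abs_self (φ x) : 0 ≤ᵐ[μ] |φ| + (-1 : ℝ) • φ)
  rw [hA.transfer_add habs hφ] at hadd
  rw [hA.transfer_add habs (hφ.smul (-1 : ℝ)), hA.transfer_smul] at hsub
  filter_upwards [hadd, hsub] with x hx hx'
  simp only [Pi.zero_apply, Pi.add_apply, Pi.smul_apply, smul_eq_mul] at hx hx'
  exact abs_le.2 ⟨by linarith, by linarith⟩

lemma norm_toL1_transfer_le (hπ : π ∈ couplings fun i => μ.real (A i)) (φ : Lp ℝ 1 μ) :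
    ‖(hA.integrable_transfer (π := π) (L1.integrable_coeFn φ)).toL1 _‖ ≤ ‖φ‖ := by
  have hφ := L1.integrable_coeFn φ
  have habs : Integrable |(φ : X → ℝ)| μ := hφ.abs
  have hTφ := hA.integrable_transfer (π := π) hφ
  calc ‖hTφ.toL1 _‖ = ∫ x, |transfer μ A π φ x| ∂μ := by
        rw [norm_eq_integral_abs]
        exact integral_congr_ae (hTφ.coeFn_toL1.fun_comp abs)
    _ ≤ ∫ x, transfer μ A π |φ| x ∂μ :=
        integral_mono_ae hTφ.abs (hA.integrable_transfer habs) (hA.abs_transfer_le hπ.1 hφ)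
    _ = ‖φ‖ := by
        rw [hA.integral_transfer hπ habs, norm_eq_integral_abs]
        rfl

end IsCellFamily

/-- `transfer μ A π` as a bounded operator on `L¹`. -/
noncomputable def transferCLM (hA : IsCellFamily μ A)
    (hπ : π ∈ couplings fun i => μ.real (A i)) : Lp ℝ 1 μ →L[ℝ] Lp ℝ 1 μ :=
  LinearMap.mkContinuous
    { toFun := fun φ => (hA.integrable_transfer (π := π) (L1.integrable_coeFn φ)).toL1 _
      map_add' := fun φ ψ => by
        have hφ := L1.integrable_coeFn φ
        have hψ := L1.integrable_coeFn ψ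
        rw [← Integrable.toL1_add, Integrable.toL1_eq_toL1_iff, ← hA.transfer_add hφ hψ]
        exact transfer_congr_ae (Lp.coeFn_add φ ψ)
      map_smul' := fun c φ => by
        rw [← Integrable.toL1_smul', Integrable.toL1_eq_toL1_iff, RingHom.id_apply,
          ← hA.transfer_smul]
        exact transfer_congr_ae (Lp.coeFn_smul c φ) }
    1 fun φ => (hA.norm_toL1_transfer_le hπ φ).trans_eq (one_mul _).symm

section TransferCLM

variable (hA : IsCellFamily μ A) (hπ : π ∈ couplings fun i => μ.real (A i))

lemma coeFn_transferCLM (φ : Lp ℝ 1 μ) : transferCLM hA hπ φ =ᵐ[μ] transfer μ A π φ :=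
  (hA.integrable_transfer (L1.integrable_coeFn φ)).coeFn_toL1

lemma isSemiDoublyStochastic_transferCLM : IsSemiDoublyStochastic (transferCLM hA hπ) := by
  refine ⟨fun φ hφ => ?_, fun φ => ?_, fun E B _ hEfin hB hBfin => ?_⟩
  · filter_upwards [coeFn_transferCLM hA hπ φ, hA.transfer_nonneg hπ.1 hφ] with x hx hnonneg
    rwa [hx]
  · rw [integral_congr_ae (coeFn_transferCLM hA hπ φ),
      hA.integral_transfer hπ (L1.integrable_coeFn φ)]
  · have hone : transferCLM hA hπ (indicatorConstLp 1 hB hBfin.ne 1) ≤ᵐ[μ] fun _ => 1 := by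
      filter_upwards [coeFn_transferCLM hA hπ (indicatorConstLp 1 hB hBfin.ne 1),
        transfer_congr_ae (A := A) (π := π) (indicatorConstLp_coeFn (p := 1) (hs := hB)
          (hμs := hBfin.ne) (c := (1 : ℝ)))] with x hx hx'
      rw [hx, hx']
      exact hA.transfer_indicator_one_le hπ hB x
    calc _ ≤ ∫ _ in E, (1 : ℝ) ∂μ :=
          integral_mono_ae (L1.integrable_coeFn _).integrableOn (integrableOn_const hEfin.ne)
            (ae_restrict_of_ae hone)
      _ = (μ E).toReal := by
          rw [setIntegral_const, smul_eq_mul, mul_one, measureReal_def]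

end TransferCLM

lemma exists_isSemiDoublyStochastic_norm_sub_le_of_step (hA : IsCellFamily μ A) {a b : ι → ℝ}
    {f g : Lp ℝ 1 μ} (hf : f =ᵐ[μ] step A a) (hg : g =ᵐ[μ] step A b) (hf0 : 0 ≤ f) {ε : ℝ}
    (hε : ∀ u, 0 ≤ u → excess μ g u ≤ excess μ f u + ε) :
    ∃ T : Lp ℝ 1 μ →L[ℝ] Lp ℝ 1 μ, IsSemiDoublyStochastic T ∧
      ‖T f - g‖ ≤ 2 * ε + (∫ x, f x ∂μ - ∫ x, g x ∂μ) := by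
  have ha : 0 ≤ a := by
    rw [← hA.cellAverage_step a, ← cellAverage_congr_ae hf]
    exact cellAverage_nonneg ((Lp.coeFn_nonneg f).2 hf0)
  obtain ⟨π, hπ, hle⟩ := exists_mem_couplings_sum_posPart_sub_mulVec_le (ε := ε) (b := b)
    (fun i => (hA.measureReal_pos i).le) ha fun u hu => by
      rw [← hA.excess_step b hu, ← hA.excess_step a hu, ← excess_congr_ae hf u,
        ← excess_congr_ae hg u]
      exact hε u hu
  let T := transferCLM hA hπ
  have hT := isSemiDoublyStochastic_transferCLM hA hπ
  have hsub : (fun x => g x - T f x) =ᵐ[μ] step A b - transfer μ A π (step A a) := by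
    filter_upwards [hg, coeFn_transferCLM hA hπ f, transfer_congr_ae (A := A) (π := π) hf]
      with x hgx hTx hfx
    rw [hgx, hTx, hfx, Pi.sub_apply]
  refine ⟨T, hT, ?_⟩
  rw [norm_sub_eq_two_mul_excess_add, excess_congr_ae hsub,
    hA.excess_step_sub_transfer_step, hT.2.1]
  linarith

end Transfer

section Approximation

variable {X E F : Type*} [MeasurableSpace X] {μ : Measure X}

lemma exists_isCellFamily_ae_eq_step_pair [NormedAddCommGroup E] [NormedAddCommGroup F]
    (φ : Lp.simpleFunc E 1 μ) (ψ : Lp.simpleFunc F 1 μ) :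
    ∃ (R : Finset (E × F)) (A : R → Set X) (a : R → E) (b : R → F),
      IsCellFamily μ A ∧ φ =ᵐ[μ] step A a ∧ ψ =ᵐ[μ] step A b := by
  let s := Lp.simpleFunc.toSimpleFunc φ
  let t := Lp.simpleFunc.toSimpleFunc ψ
  have hpair : Integrable (s.pair t) μ := SimpleFunc.integrable_pair
    (memLp_one_iff_integrable.1 (Lp.simpleFunc.memLp φ))
    (memLp_one_iff_integrable.1 (Lp.simpleFunc.memLp ψ))
  obtain ⟨R, hcells, hstep⟩ := exists_isCellFamily_ae_eq_step (s.pair t) hpair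
  refine ⟨R, _, Prod.fst ∘ Subtype.val, Prod.snd ∘ Subtype.val, hcells, ?_, ?_⟩
  · rw [← hcells.comp_step rfl]
    exact (Lp.simpleFunc.toSimpleFunc_eq_toFun φ).symm.trans (hstep.fun_comp Prod.fst)
  · rw [← hcells.comp_step rfl]
    exact (Lp.simpleFunc.toSimpleFunc_eq_toFun ψ).symm.trans (hstep.fun_comp Prod.snd)

lemma exists_simpleFunc_nonneg_norm_sub_lt {f : Lp ℝ 1 μ} (hf : 0 ≤ f) {δ : ℝ} (hδ : 0 < δ) :
    ∃ φ : Lp.simpleFunc ℝ 1 μ, 0 ≤ φ ∧ ‖f - φ‖ < δ := by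
  have hdense := Lp.simpleFunc.denseRange_coeSimpleFuncNonnegToLpNonneg 1 μ ℝ ENNReal.one_ne_top
  obtain ⟨φ, hφ⟩ := hdense.exists_dist_lt ⟨f, hf⟩ hδ
  refine ⟨φ.1, φ.2, ?_⟩
  rwa [Subtype.dist_eq, dist_eq_norm] at hφ

lemma exists_simpleFunc_norm_sub_lt (g : Lp ℝ 1 μ) {δ : ℝ} (hδ : 0 < δ) :
    ∃ ψ : Lp.simpleFunc ℝ 1 μ, ‖g - ψ‖ < δ := by
  have hdense := Lp.simpleFunc.denseRange (E := ℝ) (p := 1) (μ := μ) ENNReal.one_ne_top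
  obtain ⟨ψ, hψ⟩ := hdense.exists_dist_lt g hδ
  exact ⟨ψ, by rwa [dist_eq_norm] at hψ⟩

theorem exists_isSemiDoublyStochastic_norm_sub_lt {f g : Lp ℝ 1 μ} (hf : 0 ≤ f)
    (hexcess : ∀ u, 0 ≤ u → excess μ g u ≤ excess μ f u)
    (hint : ∫ x, g x ∂μ = ∫ x, f x ∂μ) {ε : ℝ} (hε : 0 < ε) :
    ∃ T : Lp ℝ 1 μ →L[ℝ] Lp ℝ 1 μ, IsSemiDoublyStochastic T ∧ ‖T f - g‖ < ε := by
  obtain ⟨φ, hφ0, hφ⟩ := exists_simpleFunc_nonneg_norm_sub_lt hf (show 0 < ε / 8 by positivity)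
  obtain ⟨ψ, hψ⟩ := exists_simpleFunc_norm_sub_lt g (show 0 < ε / 8 by positivity)
  obtain ⟨R, A, a, b, hA, hφA, hψA⟩ := exists_isCellFamily_ae_eq_step_pair φ ψ
  have hexcess' : ∀ u, 0 ≤ u → excess μ ψ u ≤ excess μ φ u + (‖f - φ‖ + ‖g - ψ‖) := by
    intro u hu
    have hfφ := excess_sub_excess_le_norm_sub f φ hu
    have hψg := excess_sub_excess_le_norm_sub (ψ : Lp ℝ 1 μ) g hu
    rw [norm_sub_rev] at hψg
    linarith [hexcess u hu]
  obtain ⟨T, hT, hTφ⟩ :=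
    exists_isSemiDoublyStochastic_norm_sub_le_of_step hA hφA hψA hφ0 hexcess'
  refine ⟨T, hT, ?_⟩
  have hφint := neg_le_of_abs_le (abs_integral_sub_integral_le_norm_sub f φ)
  have hψint := le_of_abs_le (abs_integral_sub_integral_le_norm_sub g ψ)
  have hTfφ : ‖T f - T φ‖ ≤ ‖f - φ‖ := by
    rw [← map_sub]
    exact hT.norm_apply_le _
  have htriangle : ‖T f - g‖ ≤ ‖T f - T φ‖ + ‖T φ - ψ‖ + ‖g - ψ‖ := by
    rw [norm_sub_rev g]
    calc ‖T f - g‖ = ‖(T f - T φ) + (T φ - ψ) + (ψ - g)‖ := by congr 1; abel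
      _ ≤ _ := norm_add₃_le
  linarith

end Approximation

theorem majorization_iff_semiDoublyStochastic_approx_general
    {X : Type*} [MeasurableSpace X] (μ : Measure X) (f g : Lp ℝ 1 μ)
    (hf : 0 ≤ᵐ[μ] (f : X → ℝ)) :
    ((∀ u : ℝ, 0 ≤ u →
        ∫⁻ t in Set.Ioi u, μ {x | (g : X → ℝ) x > t} ∂(volume : Measure ℝ)
          ≤ ∫⁻ t in Set.Ioi u, μ {x | (f : X → ℝ) x > t} ∂(volume : Measure ℝ)) ∧
      ∫ x, (g : X → ℝ) x ∂μ = ∫ x, (f : X → ℝ) x ∂μ)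
    ↔
    (∃ S : ℕ → (Lp ℝ 1 μ →L[ℝ] Lp ℝ 1 μ),
      (∀ k, IsSemiDoublyStochastic (S k)) ∧
      Tendsto (fun k => ‖S k f - g‖) atTop (𝓝 0)) := by
  have hiff : ∀ u, 0 ≤ u → (_ ↔ excess μ g u ≤ excess μ f u) := fun u hu =>
    setLIntegral_Ioi_measure_gt_le_iff (L1.integrable_coeFn g) (L1.integrable_coeFn f) hu
  rw [forall₂_congr hiff]
  constructor
  · rintro ⟨hexcess, hint⟩
    choose S hS hSlt using fun k : ℕ => exists_isSemiDoublyStochastic_norm_sub_lt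
      ((Lp.coeFn_nonneg f).1 hf) hexcess hint (Nat.one_div_pos_of_nat (n := k))
    exact ⟨S, hS, squeeze_zero (fun _ => norm_nonneg _) (fun k => (hSlt k).le)
      tendsto_one_div_add_atTop_nhds_zero_nat⟩
  · rintro ⟨S, hS, hlim⟩
    have hSf : Tendsto (fun k => S k f) atTop (𝓝 g) := tendsto_iff_norm_sub_tendsto_zero.2 hlim
    refine ⟨fun u hu => ?_, ?_⟩
    · exact le_of_tendsto' (((continuous_excess hu).tendsto g).comp hSf) fun k =>
        (hS k).excess_apply_le f hu
    · refine tendsto_nhds_unique ((continuous_integral.tendsto g).comp hSf)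
        (tendsto_const_nhds.congr fun k => ((hS k).2.1 f).symm)

/-- **Characterization of majorization by semi-doubly stochastic operators.**  Let `(X,μ)` be
σ-finite and `f, g ∈ L¹(X,μ)` nonnegative.  Then `g ≺ f`, i.e.
`∫_u^∞ μ{g > t} dt ≤ ∫_u^∞ μ{f > t} dt` for every `u ≥ 0` together with
`∫ g dμ = ∫ f dμ`, holds if and only if there is a sequence `(Sₖ)` of semi-doubly
stochastic operators on `L¹(X,μ)` with `‖Sₖf − g‖₁ → 0`. -/
theorem majorization_iff_semiDoublyStochastic_approx
    {X : Type*} [MeasurableSpace X] (μ : Measure X) [SigmaFinite μ]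
    (f g : Lp ℝ 1 μ) (hf : 0 ≤ᵐ[μ] (f : X → ℝ)) (hg : 0 ≤ᵐ[μ] (g : X → ℝ)) :
    ((∀ u : ℝ, 0 ≤ u →
        ∫⁻ t in Set.Ioi u, μ {x | (g : X → ℝ) x > t} ∂(volume : Measure ℝ)
          ≤ ∫⁻ t in Set.Ioi u, μ {x | (f : X → ℝ) x > t} ∂(volume : Measure ℝ)) ∧
      ∫ x, (g : X → ℝ) x ∂μ = ∫ x, (f : X → ℝ) x ∂μ)
    ↔
    (∃ S : ℕ → (Lp ℝ 1 μ →L[ℝ] Lp ℝ 1 μ),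
      (∀ k, IsSemiDoublyStochastic (S k)) ∧
      Tendsto (fun k => ‖S k f - g‖) atTop (𝓝 0)) :=
  majorization_iff_semiDoublyStochastic_approx_general μ f g hf
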